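/- Let W, J2, X1, X2, Y1, Y2, Z1 be random variables with values in finite sets on a common probability space. Suppose that Y1 and Y2 are each deterministic functions of the pair (X1, X2), that Z1 is a deterministic function of X1, and that Z1 is also a deterministic function of the pair (Y2, X2). Then I(W; Y1) − I(W; Y2) ≤ H(J2) + H(X2 | J2) + H(X1 | Z1). -/

import Mathlib

/-!
Write `V = (X1, X2)`. As `Y1` and `Y2` are functions of `V`, the data processing inequality gives
`I(W; Y1) - I(W; Y2) ≤ I(W; V) - I(W; Y2) = I(W; V | Y2) ≤ H(V | Y2)`. Moreover
`H(V | Y2) = H(X2 | Y2) + H(X1 | X2, Y2) ≤ H(X2) + H(X1 | Z1)`, because `Z1` is a function of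
`(Y2, X2)`, and `H(X2) ≤ H(J2, X2) = H(J2) + H(X2 | J2)`.

Expanded into joint entropies, all of this follows from two facts: entropy does not increase
under deterministic functions (`H_le_of_isDetFnOf`), and conditional mutual information is
nonnegative (`condMutInfo_nonneg`), which is proved from `log x ≤ x - 1`.
-/

/-!
Shannon entropy, conditional entropy, and mutual information for discrete random
variables defined on a common probability space modelled by a `PMF`.
The logarithm is the natural logarithm and `0 log 0 = 0` (via `Real.negMulLog`).
-/

namespace DiamondWiretap

/-- Shannon entropy `H(X)` of a random variable `X` on the probability space `(Ω, p)`. -/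
noncomputable def H {Ω S : Type*} (p : PMF Ω) (X : Ω → S) : ℝ :=
  ∑' s : S, Real.negMulLog ((p.map X) s).toReal

/-- Joint entropy `H(X, Y)`. -/
noncomputable def H2 {Ω S T : Type*} (p : PMF Ω) (X : Ω → S) (Y : Ω → T) : ℝ :=
  H p (fun ω => (X ω, Y ω))

/-- Conditional entropy `H(X | Y) = H(X, Y) - H(Y)`. -/
noncomputable def condEnt {Ω S T : Type*} (p : PMF Ω) (X : Ω → S) (Y : Ω → T) : ℝ :=
  H2 p X Y - H p Y

/-- Mutual information `I(X; Y) = H(X) + H(Y) - H(X, Y)`. -/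
noncomputable def mutInfo {Ω S T : Type*} (p : PMF Ω) (X : Ω → S) (Y : Ω → T) : ℝ :=
  H p X + H p Y - H2 p X Y

/-- Conditional mutual information `I(X; Y | Z) = H(X,Z) + H(Y,Z) - H(X,Y,Z) - H(Z)`. -/
noncomputable def condMutInfo {Ω S T U : Type*} (p : PMF Ω)
    (X : Ω → S) (Y : Ω → T) (Z : Ω → U) : ℝ :=
  H2 p X Z + H2 p Y Z - H p (fun ω => (X ω, Y ω, Z ω)) - H p Z

/-- `Z` is almost surely a deterministic function of `X`,
i.e. `Z = φ ∘ X` on the support of `p` for some function `φ`. -/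
def IsDetFnOf {Ω S T : Type*} (p : PMF Ω) (Z : Ω → T) (X : Ω → S) : Prop :=
  ∃ φ : S → T, ∀ ω ∈ p.support, Z ω = φ (X ω)

end DiamondWiretap

open DiamondWiretap

namespace DiamondWiretap

/-- The probability mass function of `X` under `p`, as a real number. -/
noncomputable def pr {Ω S : Type*} (p : PMF Ω) (X : Ω → S) (s : S) : ℝ :=
  ((p.map X) s).toReal

lemma pr_nonneg {Ω S : Type*} (p : PMF Ω) (X : Ω → S) (s : S) : 0 ≤ pr p X s :=
  ENNReal.toReal_nonneg

lemma pr_sum {Ω S : Type*} [Fintype S] (p : PMF Ω) (X : Ω → S) : ∑ s, pr p X s = 1 := by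
  unfold pr
  rw [← ENNReal.toReal_sum fun s _ => (p.map X).apply_ne_top s,
    ← tsum_fintype (L := .unconditional _), PMF.tsum_coe, ENNReal.toReal_one]

open Classical in
lemma pr_comp {Ω S T : Type*} [Fintype S] (p : PMF Ω) (X : Ω → S) (f : S → T) (t : T) :
    pr p (fun ω => f (X ω)) t = ∑ s, if t = f s then pr p X s else 0 := by
  unfold pr
  have h : p.map (fun ω => f (X ω)) = (p.map X).map f := (PMF.map_comp X p f).symm
  rw [h, PMF.map_apply, tsum_fintype, ENNReal.toReal_sum]
  · exact Finset.sum_congr rfl fun s _ => by split_ifs <;> simp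
  · intro s _
    split_ifs
    · exact (p.map X).apply_ne_top s
    · simp

lemma pr_le_comp {Ω S T : Type*} [Fintype S] (p : PMF Ω) (X : Ω → S) (f : S → T) (s : S) :
    pr p X s ≤ pr p (fun ω => f (X ω)) (f s) := by
  classical
  rw [pr_comp p X f]
  have := Finset.single_le_sum (f := fun s' => if f s = f s' then pr p X s' else 0)
    (fun s' _ => by split_ifs <;> simp [pr_nonneg]) (Finset.mem_univ s)
  simpa using this

lemma pr_marginal {Ω S T : Type*} [Fintype S] [Fintype T] (p : PMF Ω) (X : Ω → S) (Y : Ω → T)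
    (t : T) : ∑ s, pr p (fun ω => (X ω, Y ω)) (s, t) = pr p Y t := by
  classical
  rw [pr_comp p (fun ω => (X ω, Y ω)) Prod.snd t, Fintype.sum_prod_type]
  simp

/-- The entropy of `f(X)` as an expectation over the law of `X`; this lets entropies of several
functions of `X` be compared under a single sum. -/
lemma H_comp {Ω S T : Type*} [Fintype S] [Fintype T] (p : PMF Ω) (X : Ω → S) (f : S → T) :
    H p (fun ω => f (X ω)) = -∑ s, pr p X s * Real.log (pr p (fun ω => f (X ω)) (f s)) := by
  classical
  have h : H p (fun ω => f (X ω)) =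
      ∑ t, -(pr p (fun ω => f (X ω)) t * Real.log (pr p (fun ω => f (X ω)) t)) := by
    simp only [H, pr, tsum_fintype, Real.negMulLog, neg_mul]
  rw [h, Finset.sum_neg_distrib]
  congr 1
  calc _ = ∑ t, ∑ s, if t = f s then
        pr p X s * Real.log (pr p (fun ω => f (X ω)) t) else 0 := by
        refine Finset.sum_congr rfl fun t _ => ?_
        nth_rewrite 1 [pr_comp p X f t]
        rw [Finset.sum_mul]
        exact Finset.sum_congr rfl fun s _ => by split_ifs <;> simp
    _ = _ := by
        rw [Finset.sum_comm]
        simp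

lemma H_comp_le {Ω S T : Type*} [Fintype S] [Fintype T] (p : PMF Ω) (X : Ω → S) (f : S → T) :
    H p (fun ω => f (X ω)) ≤ H p X := by
  rw [H_comp, H_comp p X fun s => s]
  refine neg_le_neg (Finset.sum_le_sum fun s _ => ?_)
  rcases (pr_nonneg p X s).eq_or_lt with h | h
  · simp [← h]
  · exact mul_le_mul_of_nonneg_left (Real.log_le_log h (pr_le_comp p X f s)) h.le

/-- Entropy depends only on the almost sure class of the random variable. -/
lemma H_congr {Ω S : Type*} (p : PMF Ω) {X Y : Ω → S} (h : ∀ ω ∈ p.support, X ω = Y ω) :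
    H p X = H p Y := by
  classical
  have : p.map X = p.map Y := by
    ext s
    rw [PMF.map_apply, PMF.map_apply]
    refine tsum_congr fun ω => ?_
    by_cases hω : ω ∈ p.support
    · rw [h ω hω]
    · rw [PMF.mem_support_iff, not_not] at hω
      simp [hω]
  simp only [H, this]

lemma H_le_of_isDetFnOf {Ω S T : Type*} [Fintype S] [Fintype T] (p : PMF Ω) {X : Ω → S}
    {Z : Ω → T} (h : IsDetFnOf p Z X) : H p Z ≤ H p X := by
  obtain ⟨φ, hφ⟩ := h
  rw [H_congr p hφ]
  exact H_comp_le p X φ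

/-- Nonnegativity of conditional mutual information, i.e. submodularity of entropy. -/
lemma condMutInfo_nonneg {Ω A B C : Type*} [Fintype A] [Fintype B] [Fintype C] (p : PMF Ω)
    (X : Ω → A) (Y : Ω → B) (Z : Ω → C) : 0 ≤ condMutInfo p X Y Z := by
  set J : Ω → A × B × C := fun ω => (X ω, Y ω, Z ω) with hJ
  have e1 := H_comp p J fun s => s
  have e2 := H_comp p J fun s => (s.1, s.2.2)
  have e3 := H_comp p J fun s => s.2
  have e4 := H_comp p J fun s => s.2.2
  have l2 := pr_le_comp p J fun s => (s.1, s.2.2)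
  have l3 := pr_le_comp p J fun s => s.2
  have l4 := pr_le_comp p J fun s => s.2.2
  simp only [hJ] at e1 e2 e3 e4 l2 l3 l4
  rw [← hJ] at e1 e2 e3 e4 l2 l3 l4
  set q := pr p J
  set qXZ := pr p fun ω => (X ω, Z ω) with hXZ
  set qYZ := pr p fun ω => (Y ω, Z ω) with hYZ
  set qZ := pr p Z with hZ
  have hq0 : ∀ s, 0 ≤ q s := pr_nonneg p J
  have key : ∀ s : A × B × C,
      q s * (Real.log (qXZ (s.1, s.2.2)) + Real.log (qYZ s.2) - Real.log (q s)
        - Real.log (qZ s.2.2)) ≤ qXZ (s.1, s.2.2) * qYZ s.2 / qZ s.2.2 - q s := by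
    intro s
    rcases (hq0 s).eq_or_lt with h | h
    · rw [← h, zero_mul, sub_zero]
      exact div_nonneg (mul_nonneg (pr_nonneg ..) (pr_nonneg ..)) (pr_nonneg ..)
    · have h2 : 0 < qXZ (s.1, s.2.2) := h.trans_le (l2 s)
      have h3 : 0 < qYZ s.2 := h.trans_le (l3 s)
      have h4 : 0 < qZ s.2.2 := h.trans_le (l4 s)
      have hl := Real.log_le_sub_one_of_pos (div_pos (mul_pos h2 h3) (mul_pos h h4))
      rw [Real.log_div (mul_pos h2 h3).ne' (mul_pos h h4).ne', Real.log_mul h2.ne' h3.ne',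
        Real.log_mul h.ne' h4.ne'] at hl
      calc _ ≤ q s * (qXZ (s.1, s.2.2) * qYZ s.2 / (q s * qZ s.2.2) - 1) :=
            mul_le_mul_of_nonneg_left (by linarith) h.le
        _ = _ := by field_simp
  have tot : ∑ s : A × B × C, qXZ (s.1, s.2.2) * qYZ s.2 / qZ s.2.2 = 1 := by
    simp only [Fintype.sum_prod_type]
    rw [Finset.sum_comm]
    simp_rw [Finset.sum_comm (s := (Finset.univ : Finset A)), ← Finset.sum_div, ← Finset.sum_mul]
    rw [Finset.sum_comm]
    simp_rw [hXZ, pr_marginal, ← Finset.sum_div, ← Finset.mul_sum, hYZ, pr_marginal, ← hZ]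
    simp_rw [mul_self_div_self]
    exact pr_sum p Z
  have hsum := Finset.sum_le_sum fun s (_ : s ∈ Finset.univ) => key s
  rw [Finset.sum_sub_distrib, tot, pr_sum p J, sub_self] at hsum
  simp only [mul_sub, mul_add, Finset.sum_sub_distrib, Finset.sum_add_distrib] at hsum
  unfold condMutInfo H2
  rw [e2, e3, e4, e1]
  linarith

/-- Subadditivity of entropy: the case of a trivial conditioning variable. -/
lemma H2_le_add {Ω A B : Type*} [Fintype A] [Fintype B] (p : PMF Ω)
    (X : Ω → A) (Y : Ω → B) : H2 p X Y ≤ H p X + H p Y := by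
  have h := condMutInfo_nonneg p X Y fun _ => ()
  have h1 : H2 p X (fun _ => ()) ≤ H p X := H_comp_le p X fun x => (x, ())
  have h2 : H2 p Y (fun _ => ()) ≤ H p Y := H_comp_le p Y fun y => (y, ())
  have h3 : H2 p X Y ≤ H p (fun ω => (X ω, Y ω, ())) :=
    H_comp_le p (fun ω => (X ω, Y ω, ())) fun s => (s.1, s.2.1)
  have h4 : 0 ≤ H p (fun _ : Ω => ()) := by
    have h1 := pr_sum p fun _ : Ω => ()
    simp only [Finset.univ_unique, Finset.sum_singleton, pr] at h1
    simp only [H, tsum_fintype, Finset.univ_unique, Finset.sum_singleton, h1, Real.negMulLog_one,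
      le_refl]
  unfold condMutInfo at h
  linarith

end DiamondWiretap

/-- If `Y1, Y2` are deterministic functions of `(X1, X2)`, and `Z1` is a
deterministic function of `X1` and also of `(Y2, X2)`, then
`I(W; Y1) − I(W; Y2) ≤ H(J2) + H(X2 | J2) + H(X1 | Z1)`. -/
theorem stmt4 {Ω SW SJ2 S1 S2 T1 T2 U : Type*}
    [Fintype SW] [Fintype SJ2] [Fintype S1] [Fintype S2]
    [Fintype T1] [Fintype T2] [Fintype U]
    (p : PMF Ω) (W : Ω → SW) (J2 : Ω → SJ2) (X1 : Ω → S1) (X2 : Ω → S2)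
    (Y1 : Ω → T1) (Y2 : Ω → T2) (Z1 : Ω → U)
    (hY1 : IsDetFnOf p Y1 (fun ω => (X1 ω, X2 ω)))
    (hY2 : IsDetFnOf p Y2 (fun ω => (X1 ω, X2 ω)))
    (hZ1 : IsDetFnOf p Z1 X1)
    (hZ2 : IsDetFnOf p Z1 (fun ω => (Y2 ω, X2 ω))) :
    mutInfo p W Y1 - mutInfo p W Y2 ≤ H p J2 + condEnt p X2 J2 + condEnt p X1 Z1 := by
  obtain ⟨f1, hf1⟩ := hY1
  obtain ⟨f2, hf2⟩ := hY2
  obtain ⟨g, hg⟩ := hZ2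
  -- Data processing: `I(W; Y1) ≤ I(W; X1, X2)`.
  have a1 := condMutInfo_nonneg p W (fun ω => (X1 ω, X2 ω)) Y1
  have a2 : H2 p (fun ω => (X1 ω, X2 ω)) Y1 ≤ H p (fun ω => (X1 ω, X2 ω)) :=
    H_le_of_isDetFnOf p ⟨fun v => (v, f1 v), fun ω hω => Prod.ext rfl (hf1 ω hω)⟩
  -- `H(W, Y2) ≤ H(W, X1, X2)`, i.e. `I(W; X1, X2) - I(W; Y2) ≤ H(X1, X2) - H(Y2)`.
  have a3 : H2 p W Y2 ≤ H p (fun ω => (W ω, (X1 ω, X2 ω), Y1 ω)) :=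
    H_le_of_isDetFnOf p ⟨fun v => (v.1, f2 v.2.1), fun ω hω => Prod.ext rfl (hf2 ω hω)⟩
  -- `H(X1, X2) ≤ H(Y2, X2) + H(X1 | Z1)`, as `Z1` is a function of `(Y2, X2)`.
  have b1 := condMutInfo_nonneg p X1 (fun ω => (Y2 ω, X2 ω)) Z1
  have b2 : H2 p (fun ω => (Y2 ω, X2 ω)) Z1 ≤ H p (fun ω => (Y2 ω, X2 ω)) :=
    H_le_of_isDetFnOf p ⟨fun v => (v, g v), fun ω hω => Prod.ext rfl (hg ω hω)⟩
  have b3 : H p (fun ω => (X1 ω, X2 ω)) ≤ H p (fun ω => (X1 ω, (Y2 ω, X2 ω), Z1 ω)) :=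
    H_comp_le p (fun ω => (X1 ω, (Y2 ω, X2 ω), Z1 ω)) fun v => (v.1, v.2.1.2)
  have c1 : H p (fun ω => (Y2 ω, X2 ω)) ≤ H p Y2 + H p X2 := H2_le_add p Y2 X2
  have c2 : H p X2 ≤ H2 p X2 J2 := H_comp_le p (fun ω => (X2 ω, J2 ω)) Prod.fst
  unfold condMutInfo at a1 b1
  unfold mutInfo condEnt
  linarith
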